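/- Let h : ℝⁿ → [0,∞) be continuous with ∫_{ℝⁿ} h(x) dx < ∞ and lim_{R→∞} ∫_{|x| > R} h(x) dx = 0. Let (P_k) be a sequence of Borel probability measures on ℝⁿ, each absolutely continuous with respect to Lebesgue measure with density f_k satisfying f_k ≤ h almost everywhere, and suppose P_k converges weakly to a Borel probability measure P on ℝⁿ. Then P is absolutely continuous with respect to Lebesgue measure and its density f satisfies f ≤ h almost everywhere. -/

import Mathlib

/-!
Let `ν` be the measure with density `h`; it is finite, hence outer regular, and `P k ≤ ν` for every
`k`. By the portmanteau theorem `Plim U ≤ liminf P k U ≤ ν U` for every open `U`, and outer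
regularity of `ν` extends this to `Plim ≤ ν`. So `Plim ≪ ν ≪ volume`, and comparing the
integrals of the two densities over measurable sets shows that the density of `Plim` is at most `h`
almost everywhere.
-/

open MeasureTheory Real Set Filter Topology
open scoped ENNReal

noncomputable section

/-- Let `h : ℝⁿ → [0,∞)` be continuous, integrable, with vanishing tails.
If `(P_k)` are Borel probability measures on `ℝⁿ`, each absolutely continuous with density
bounded a.e. by `h`, and `P_k → P` weakly for a Borel probability measure `P`, then `P` is
absolutely continuous with respect to Lebesgue measure and its density is a.e. bounded by `h`. -/
theorem weak_limit_density_bounded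
    (n : ℕ) (h : EuclideanSpace ℝ (Fin n) → ℝ)
    (hcont : Continuous h) (hpos : ∀ x, 0 ≤ h x)
    (hint : Integrable h volume)
    (htail : Tendsto (fun R : ℝ => ∫ x in {x : EuclideanSpace ℝ (Fin n) | R < ‖x‖}, h x)
        atTop (nhds 0))
    (P : ℕ → Measure (EuclideanSpace ℝ (Fin n)))
    (hP : ∀ k, IsProbabilityMeasure (P k))
    (hdens : ∀ k, ∃ f : EuclideanSpace ℝ (Fin n) → ℝ, Measurable f ∧ (∀ x, 0 ≤ f x) ∧
        P k = volume.withDensity (fun x => ENNReal.ofReal (f x)) ∧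
        ∀ᵐ x ∂volume, f x ≤ h x)
    (Plim : Measure (EuclideanSpace ℝ (Fin n)))
    (hPlim : IsProbabilityMeasure Plim)
    (hweak : ∀ g : BoundedContinuousFunction (EuclideanSpace ℝ (Fin n)) ℝ,
        Tendsto (fun k => ∫ x, g x ∂(P k)) atTop (nhds (∫ x, g x ∂Plim))) :
    Plim ≪ volume ∧
    ∀ᵐ x ∂volume, Plim.rnDeriv volume x ≤ ENNReal.ofReal (h x) := by
  set ν : Measure (EuclideanSpace ℝ (Fin n)) :=
    volume.withDensity (fun x => ENNReal.ofReal (h x)) with hν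
  have hνfin : IsFiniteMeasure ν := isFiniteMeasure_withDensity_ofReal hint.2
  have hPν : ∀ k, P k ≤ ν := by
    intro k
    obtain ⟨f, -, -, hPf, hfh⟩ := hdens k
    rw [hPf]
    refine withDensity_mono ?_
    filter_upwards [hfh] with x hx using ENNReal.ofReal_le_ofReal hx
  have hconv : Tendsto (β := ProbabilityMeasure (EuclideanSpace ℝ (Fin n)))
      (fun k => ⟨P k, hP k⟩) atTop (𝓝 ⟨Plim, hPlim⟩) :=
    ProbabilityMeasure.tendsto_iff_forall_integral_tendsto.mpr hweak
  have hopen : ∀ U : Set (EuclideanSpace ℝ (Fin n)), IsOpen U → Plim U ≤ ν U := by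
    intro U hU
    calc Plim U ≤ atTop.liminf (fun k => P k U) :=
          ProbabilityMeasure.le_liminf_measure_open_of_tendsto hconv hU
      _ ≤ atTop.liminf (fun _ : ℕ => ν U) :=
          liminf_le_liminf (Eventually.of_forall fun k => hPν k U)
      _ = ν U := liminf_const _
  have hle : Plim ≤ ν := by
    refine Measure.le_iff'.mpr fun A => ?_
    rw [A.measure_eq_iInf_isOpen ν]
    exact le_iInf₂ fun U hAU => le_iInf fun hU => (measure_mono hAU).trans (hopen U hU)
  refine ⟨(Measure.absolutelyContinuous_of_le hle).trans
    (withDensity_absolutelyContinuous _ _), ?_⟩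
  refine ae_le_of_forall_setLIntegral_le_of_sigmaFinite (Measure.measurable_rnDeriv _ _) ?_
  intro s hs _
  rw [← withDensity_apply _ hs, ← withDensity_apply _ hs]
  exact ((Measure.withDensity_rnDeriv_le Plim volume) s).trans (hle s)
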